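/- arXiv:2008.09509 — 6 statements merged into one kernel-verified Lean document; each statement's English description precedes it below -/
import Mathlib

section
/- Let H be a complex Hilbert space and let T ∈ B(H). If the real part Re T = (T + T*)/2 is a positive operator and T² = 0, then T = 0. -/
/-!
Positivity of the real part says `0 ≤ Re ⟪T y, y⟫` for all `y`. Since `T ^ 2 = 0`, the vectors
`y = x + s • T x` (`s` real) all have the same image `T y = T x`, so
`0 ≤ Re ⟪T x, x⟫ + s * ‖T x‖ ^ 2` for every real `s`, which forces `T x = 0`.
-/

lemma re_inner_apply_nonneg_of_re_positive
    {H : Type*} [NormedAddCommGroup H] [InnerProductSpace ℂ H] [CompleteSpace H]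
    {T : H →L[ℂ] H}
    (hre : (((2 : ℂ)⁻¹) • (T + ContinuousLinearMap.adjoint T)).IsPositive) (y : H) :
    0 ≤ (inner ℂ (T y) y).re := by
  have h := hre.re_inner_nonneg_left y
  have hsymm : (inner ℂ y (T y)).re = (inner ℂ (T y) y).re := inner_re_symm (𝕜 := ℂ) y (T y)
  simp only [smul_apply, add_apply, inner_smul_left,
    inner_add_left, ContinuousLinearMap.adjoint_inner_left] at h
  have h2 : (starRingEnd ℂ) (2 : ℂ)⁻¹ = (((2 : ℝ)⁻¹ : ℝ) : ℂ) := by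
    rw [← Complex.conj_ofReal]; norm_num
  rw [h2, RCLike.re_eq_complex_re, Complex.re_ofReal_mul, Complex.add_re, hsymm] at h
  linarith

/-- If `T` is a bounded operator on a complex Hilbert space whose real part
`(T + T*)/2` is positive and `T ^ 2 = 0`, then `T = 0`. -/
theorem nilpotent_sq_zero_of_re_positive
    {H : Type*} [NormedAddCommGroup H] [InnerProductSpace ℂ H] [CompleteSpace H]
    (T : H →L[ℂ] H)
    (hre : (((2 : ℂ)⁻¹) • (T + ContinuousLinearMap.adjoint T)).IsPositive)
    (hnil : T ^ 2 = 0) :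
    T = 0 := by
  ext x
  have hTT : T (T x) = 0 := by
    have := congrArg (fun S : H →L[ℂ] H => S x) hnil
    simpa [pow_two] using this
  have key : ∀ s : ℝ, 0 ≤ (inner ℂ (T x) x).re + s * ‖T x‖ ^ 2 := by
    intro s
    have h := re_inner_apply_nonneg_of_re_positive hre (x + (s : ℂ) • T x)
    rw [map_add, map_smul, hTT, smul_zero, add_zero, inner_add_right, inner_smul_right,
      Complex.add_re, Complex.re_ofReal_mul, inner_self_eq_norm_sq_to_K] at h
    norm_cast at h
  by_contra hx
  have hpos : 0 < ‖T x‖ ^ 2 := by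
    have : 0 < ‖T x‖ := norm_pos_iff.mpr hx
    positivity
  -- This value of `s` makes the expression in `key` equal to `-1`.
  have h := key (-((inner ℂ (T x) x).re + 1) / ‖T x‖ ^ 2)
  rw [div_mul_cancel₀ _ hpos.ne'] at h
  linarith
end

section
/- Let H be a complex Hilbert space, let T ∈ B(H), and let n ≥ 2. If Tⁿ = 0 and the real part Re T = (T + T*)/2 is a positive operator, then T = 0. -/
/-!
Positivity of the real part says `0 ≤ Re ⟪T v, v⟫` for every `v`. If `T (T x) = 0`, put `y = T x`;
then `T (x + s y) = y` for all real `s`, so `0 ≤ Re ⟪y, x⟫ + s ‖y‖ ^ 2` for all `s`, which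
forces `y = 0`. Hence `ker T² = ker T`, so a vanishing power of `T` can be lowered down to `T` itself.
-/

lemma re_inner_nonneg_of_re_positive
    {H : Type*} [NormedAddCommGroup H] [InnerProductSpace ℂ H] [CompleteSpace H]
    (T : H →L[ℂ] H)
    (hre : (((2 : ℂ)⁻¹) • (T + ContinuousLinearMap.adjoint T)).IsPositive) (v : H) :
    0 ≤ (inner ℂ (T v) v).re := by
  have h := hre.re_inner_nonneg_left v
  have hsymm : (inner ℂ v (T v)).re = (inner ℂ (T v) v).re := inner_re_symm (𝕜 := ℂ) v (T v)
  simp only [smul_apply, add_apply, inner_smul_left,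
    inner_add_left, ContinuousLinearMap.adjoint_inner_left] at h
  have h2 : (starRingEnd ℂ) (2 : ℂ)⁻¹ = ((2⁻¹ : ℝ) : ℂ) := by
    rw [← Complex.conj_ofReal]; simp
  rw [h2] at h
  simp only [RCLike.re_to_complex, Complex.re_ofReal_mul, Complex.add_re] at h
  linarith

lemma apply_eq_zero_of_apply_apply_eq_zero
    {H : Type*} [NormedAddCommGroup H] [InnerProductSpace ℂ H]
    (T : H →L[ℂ] H) (hT : ∀ v, 0 ≤ (inner ℂ (T v) v).re) (x : H) (hx : T (T x) = 0) :
    T x = 0 := by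
  by_contra hne
  have hpos : 0 < ‖T x‖ ^ 2 := by positivity
  have key (s : ℝ) : 0 ≤ (inner ℂ (T x) x).re + s * ‖T x‖ ^ 2 := by
    have h := hT (x + (s : ℂ) • T x)
    rw [map_add, map_smul, hx, smul_zero, add_zero, inner_add_right, inner_smul_right,
      Complex.add_re, Complex.re_ofReal_mul, inner_self_eq_norm_sq_to_K] at h
    norm_cast at h
  -- This `s` makes the affine function of `s` in `key` equal to `-1`.
  have h := key (-((inner ℂ (T x) x).re + 1) / ‖T x‖ ^ 2)
  rw [div_mul_cancel₀ _ hpos.ne'] at h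
  linarith

/-- If `T` is a bounded operator on a complex Hilbert space whose real part
`(T + T*)/2` is positive and `T ^ n = 0` for some `n ≥ 2`, then `T = 0`. -/
theorem nilpotent_zero_of_re_positive
    {H : Type*} [NormedAddCommGroup H] [InnerProductSpace ℂ H] [CompleteSpace H]
    (T : H →L[ℂ] H) (n : ℕ) (hn : 2 ≤ n)
    (hre : (((2 : ℂ)⁻¹) • (T + ContinuousLinearMap.adjoint T)).IsPositive)
    (hnil : T ^ n = 0) :
    T = 0 := by
  have hT := re_inner_nonneg_of_re_positive T hre
  have descend (k : ℕ) (hk : T ^ (k + 1) = 0) : T = 0 := by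
    induction k with
    | zero => simpa using hk
    | succ k ih =>
      apply ih
      ext x
      have h : (T ^ (k + 1 + 1)) x = 0 := by rw [hk]; rfl
      rw [pow_succ', pow_succ'] at h
      rw [pow_succ']
      exact apply_eq_zero_of_apply_apply_eq_zero T hT ((T ^ k) x) h
  obtain ⟨k, rfl⟩ : ∃ k, n = k + 1 := ⟨n - 1, by omega⟩
  exact descend k hnil
end

section
/- Let H be a complex Hilbert space, let T ∈ B(H), and let n ≥ 2. If Tⁿ = 0 and the imaginary part Im T = (T − T*)/(2i) is a positive operator, then T = 0. -/
/-!
If `T x = 0`, then `⟪(Im T) x, x⟫ = 0`, and positivity of `Im T` forces `(Im T) x = 0`, hence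
`T* x = 0`. So `ker T ⊆ ker T*`. Applied to `T x` when `T (T x) = 0`, this gives `T* T x = 0`, i.e.
`T x = 0`. Therefore `ker T² = ker T`, and the exponent in `T ^ n = 0` can be lowered to `1`.
-/

open ContinuousLinearMap in
/-- Writing `S = B* B`, one has `⟪S x, x⟫ = ‖B x‖²`. -/
lemma apply_eq_zero_of_isPositive_of_inner_eq_zero
    {H : Type*} [NormedAddCommGroup H] [InnerProductSpace ℂ H] [CompleteSpace H]
    {S : H →L[ℂ] H} (hS : S.IsPositive) {x : H} (hx : inner ℂ (S x) x = 0) : S x = 0 := by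
  obtain ⟨B, rfl⟩ := CStarAlgebra.nonneg_iff_eq_star_mul_self.mp
    ((nonneg_iff_isPositive S).mpr hS)
  rw [star_eq_adjoint, mul_apply_eq_comp, adjoint_inner_left, inner_self_eq_zero] at hx
  simp [hx]

open ContinuousLinearMap in
lemma adjoint_apply_eq_zero_of_apply_eq_zero
    {H : Type*} [NormedAddCommGroup H] [InnerProductSpace ℂ H] [CompleteSpace H]
    {T : H →L[ℂ] H} (him : (((2 * Complex.I)⁻¹) • (T - adjoint T)).IsPositive)
    {x : H} (hx : T x = 0) : adjoint T x = 0 := by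
  have h := apply_eq_zero_of_isPositive_of_inner_eq_zero him (x := x) (by
    simp [hx, adjoint_inner_left])
  simpa [hx] using h

/-- If `T` is a bounded operator on a complex Hilbert space whose imaginary part
`(T - T*)/(2i)` is positive and `T ^ n = 0` for some `n ≥ 2`, then `T = 0`. -/
theorem nilpotent_zero_of_im_positive
    {H : Type*} [NormedAddCommGroup H] [InnerProductSpace ℂ H] [CompleteSpace H]
    (T : H →L[ℂ] H) (n : ℕ) (hn : 2 ≤ n)
    (him : (((2 * Complex.I)⁻¹) • (T - ContinuousLinearMap.adjoint T)).IsPositive)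
    (hnil : T ^ n = 0) :
    T = 0 := by
  have hker : ∀ x, T (T x) = 0 → T x = 0 := fun x hx => by
    have h := adjoint_apply_eq_zero_of_apply_eq_zero him hx
    rw [← inner_self_eq_zero (𝕜 := ℂ), ← ContinuousLinearMap.adjoint_inner_left, h,
      inner_zero_left]
  have hpow : ∀ k : ℕ, T ^ (k + 1) = 0 → T = 0 := by
    intro k
    induction k with
    | zero => intro h; simpa using h
    | succ k ih =>
      intro h
      refine ih (ContinuousLinearMap.ext fun x => ?_)
      have hx : T (T ((T ^ k) x)) = 0 := by
        have := congrArg (fun A : H →L[ℂ] H => A x) h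
        simpa only [pow_succ', mul_apply_eq_comp, zero_apply] using this
      simpa only [pow_succ', mul_apply_eq_comp, zero_apply] using hker _ hx
  obtain ⟨k, rfl⟩ : ∃ k, n = k + 1 := ⟨n - 1, by omega⟩
  exact hpow k hnil
end

section
/- Let T be an m × m complex matrix and let n ≥ 2. If Tⁿ = 0 and the Hermitian matrix (T + T*)/2 is positive semidefinite, then T = 0. -/
/-!
A nilpotent matrix has trace zero, so the positive semidefinite matrix `(T + T*)/2` has trace
zero and therefore vanishes. Hence `T* = -T`. For such `T` the matrix `(T ^ k)* * T ^ k` equals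
`± T ^ (2 * k)`, so `T ^ (k + 1) = 0` forces `T ^ k = 0` as soon as `k ≥ 1`, and descending
on the exponent gives `T = 0`.
-/

open scoped ComplexOrder

/-- A nilpotent skew-Hermitian matrix vanishes. -/
lemma eq_zero_of_pow_eq_zero_of_conjTranspose_eq_neg {m : ℕ} {T : Matrix (Fin m) (Fin m) ℂ}
    (hT : T.conjTranspose = -T) (k : ℕ) (hk : T ^ (k + 1) = 0) : T = 0 := by
  induction k with
  | zero => simpa using hk
  | succ k ih =>
    apply ih
    rw [← Matrix.conjTranspose_mul_self_eq_zero, Matrix.conjTranspose_pow, hT, neg_pow, mul_assoc,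
      ← pow_add, pow_eq_zero_of_le (by omega) hk, mul_zero]

/-- If `T` is a complex `m × m` matrix with `T ^ n = 0` for some `n ≥ 2` and the
Hermitian matrix `(T + T*)/2` is positive semidefinite, then `T = 0`. -/
theorem matrix_nilpotent_zero_of_re_posSemidef
    {m : ℕ} (T : Matrix (Fin m) (Fin m) ℂ) (n : ℕ) (hn : 2 ≤ n)
    (hnil : T ^ n = 0)
    (hpos : (((2 : ℂ)⁻¹) • (T + T.conjTranspose)).PosSemidef) :
    T = 0 := by
  have htr : T.trace = 0 := (Matrix.isNilpotent_trace_of_isNilpotent ⟨n, hnil⟩).eq_zero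
  have hzero : ((2 : ℂ)⁻¹) • (T + T.conjTranspose) = 0 :=
    hpos.trace_eq_zero_iff.mp (by simp [Matrix.trace_conjTranspose, htr])
  have hskew : T.conjTranspose = -T :=
    eq_neg_of_add_eq_zero_right ((smul_eq_zero.mp hzero).resolve_left (by norm_num))
  exact eq_zero_of_pow_eq_zero_of_conjTranspose_eq_neg hskew n
    (pow_eq_zero_of_le n.le_succ hnil)
end

section
/- Let H be a complex Hilbert space and let T be a densely defined closed linear operator with domain D(T) ⊆ H such that D(T) ⊆ D(T*). Suppose T is nilpotent: T maps D(T) into D(T) and Tⁿ x = 0 for all x ∈ D(T), for some n ≥ 1. Then T is bounded on its domain, i.e. there exists a constant C ≥ 0 with ‖T x‖ ≤ C‖x‖ for all x ∈ D(T), and D(T) = H. -/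
/-!
By the closed graph theorem, `T*` is bounded on `D(T)` for the graph norm of `T`: there is `c` with
`‖T* x‖ ≤ c (‖x‖ + ‖T x‖)` for `x ∈ D(T)` (`exists_adjoint_bound`). Hence, for `y = Tᵐ x`,
`‖T y‖² = ⟪T* T y, y⟫ ≤ c (‖T y‖ + ‖T² y‖) ‖y‖`. If `‖Tᵐ⁺² x‖ ≤ C ‖Tᵐ⁺¹ x‖` for all `x`, this gives
`‖Tᵐ⁺¹ x‖ ≤ c (1 + C) ‖Tᵐ x‖` for all `x`. Nilpotency supplies such a bound (with `C = 0`) for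
large `m`, and descending to `m = 0` shows that `T` is bounded. A bounded, densely defined, closed
operator is defined everywhere (`domain_eq_top_of_bound`).
-/

/-- `T*` restricted to `D(T)` is bounded with respect to the graph norm of `T`. The closed graph
theorem is applied to the map `(x, T x) ↦ T* x` on the complete space `T.graph`. -/
theorem exists_adjoint_bound
    {H : Type*} [NormedAddCommGroup H] [InnerProductSpace ℂ H] [CompleteSpace H]
    (T : H →ₗ.[ℂ] H) (hdense : Dense (T.domain : Set H)) (hclosed : T.IsClosed)
    (hsub : T.domain ≤ T.adjoint.domain) :
    ∃ c : ℝ, 0 ≤ c ∧ ∀ x : T.domain,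
      ‖T.adjoint ⟨x, hsub x.2⟩‖ ≤ c * (‖(x : H)‖ + ‖T x‖) := by
  have hdom : ∀ p : T.graph, (p : H × H).1 ∈ T.adjoint.domain := fun p =>
    hsub (LinearPMap.mem_domain_of_mem_graph p.2)
  have : CompleteSpace T.graph := hclosed.completeSpace_coe
  let S : T.graph →ₗ[ℂ] H := T.adjoint.toFun.comp
    (LinearMap.codRestrict T.adjoint.domain ((LinearMap.fst ℂ H H).comp T.graph.subtype) hdom)
  have hS : ∀ (p : T.graph) (y : T.domain),
      inner ℂ (S p) (y : H) = inner ℂ (p : H × H).1 (T y) := fun p y =>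
    LinearPMap.adjoint_isFormalAdjoint hdense ⟨_, hdom p⟩ y
  have hcont : Continuous S := by
    refine S.continuous_of_seq_closed_graph fun u p z hu hz => ?_
    refine hdense.eq_of_inner_left ℂ fun y hy => ?_
    have h1 : Filter.Tendsto (fun k => inner ℂ (S (u k)) y) Filter.atTop
        (nhds (inner ℂ z y)) := hz.inner tendsto_const_nhds
    have h2 : Filter.Tendsto (fun k => inner ℂ (S (u k)) y) Filter.atTop
        (nhds (inner ℂ (S p) y)) := by
      have h3 : Filter.Tendsto (fun k => (u k : H × H).1) Filter.atTop
          (nhds (p : H × H).1) :=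
        ((continuous_fst.comp continuous_subtype_val).tendsto p).comp hu
      have h4 : Filter.Tendsto (fun k => inner ℂ (u k : H × H).1 (T ⟨y, hy⟩)) Filter.atTop
          (nhds (inner ℂ (p : H × H).1 (T ⟨y, hy⟩))) := h3.inner tendsto_const_nhds
      rw [hS p ⟨y, hy⟩]
      exact h4.congr fun k => (hS (u k) ⟨y, hy⟩).symm
    exact tendsto_nhds_unique h1 h2
  let S' : T.graph →L[ℂ] H := ⟨S, hcont⟩
  refine ⟨‖S'‖, S'.opNorm_nonneg, fun x => ?_⟩
  let p : T.graph := ⟨((x : H), T x), T.mem_graph x⟩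
  have hp : ‖p‖ ≤ ‖(x : H)‖ + ‖T x‖ :=
    max_le (le_add_of_nonneg_right (norm_nonneg _)) (le_add_of_nonneg_left (norm_nonneg _))
  exact (S'.le_opNorm p).trans (mul_le_mul_of_nonneg_left hp S'.opNorm_nonneg)

/-- The continuous extension `F` of `T` to `H` satisfies `(x, F x) ∈ T.graph` for `x` in the dense
set `D(T)`, hence for every `x`, the graph being closed. -/
theorem domain_eq_top_of_bound
    {H : Type*} [NormedAddCommGroup H] [InnerProductSpace ℂ H] [CompleteSpace H]
    (T : H →ₗ.[ℂ] H) (hdense : Dense (T.domain : Set H)) (hclosed : T.IsClosed)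
    (C : ℝ) (hC : ∀ x : T.domain, ‖T x‖ ≤ C * ‖(x : H)‖) : T.domain = ⊤ := by
  let f : T.domain →L[ℂ] H := T.toFun.mkContinuous C hC
  let F : H →L[ℂ] H := f.extend T.domain.subtypeL
  have hF : ∀ x : T.domain, F x = T x := fun x =>
    ContinuousLinearMap.extend_eq f (e := T.domain.subtypeL) hdense.denseRange_val
      isUniformEmbedding_subtype_val.isUniformInducing x
  have hcl : IsClosed {x : H | (x, F x) ∈ T.graph} :=
    IsClosed.preimage (f := fun x : H => (x, F x)) (by fun_prop) hclosed
  refine (Submodule.eq_top_iff').2 fun x => ?_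
  have hx : x ∈ closure (T.domain : Set H) := hdense x
  have hmem : (x, F x) ∈ T.graph := by
    refine closure_minimal (fun y hy => ?_) hcl hx
    have h := T.mem_graph ⟨y, hy⟩
    rw [← hF ⟨y, hy⟩] at h
    exact h
  exact LinearPMap.mem_domain_of_mem_graph hmem

/-- A densely defined closed nilpotent operator `T` with `D(T) ⊆ D(T*)` is a bounded
operator defined on all of `H`. -/
theorem closed_nilpotent_bounded_of_domain_le_adjoint_domain
    {H : Type*} [NormedAddCommGroup H] [InnerProductSpace ℂ H] [CompleteSpace H]
    (T : H →ₗ.[ℂ] H)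
    (hdense : Dense (T.domain : Set H))
    (hclosed : T.IsClosed)
    (hsub : T.domain ≤ T.adjoint.domain)
    (hmaps : ∀ x : T.domain, (T x : H) ∈ T.domain)
    (n : ℕ) (hn : 1 ≤ n)
    (hnil : ∀ x : T.domain,
      ((((fun y : T.domain => (⟨T y, hmaps y⟩ : T.domain))^[n] x) : T.domain) : H) = 0) :
    (∃ C : ℝ, 0 ≤ C ∧ ∀ x : T.domain, ‖(T x : H)‖ ≤ C * ‖(x : H)‖) ∧ T.domain = ⊤ := by
  obtain ⟨c, hc, hadj⟩ := exists_adjoint_bound T hdense hclosed hsub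
  set f : T.domain → T.domain := fun y => ⟨T y, hmaps y⟩
  have key : ∀ y : T.domain, ‖f y‖ * ‖f y‖ ≤ c * (‖f y‖ + ‖f (f y)‖) * ‖y‖ := by
    intro y
    have h1 : inner ℂ (T.adjoint ⟨f y, hsub (f y).2⟩) (y : H) = inner ℂ (T y) (T y) :=
      LinearPMap.adjoint_isFormalAdjoint hdense ⟨f y, hsub (f y).2⟩ y
    have h2 : ‖f y‖ * ‖f y‖ = ‖inner ℂ (T y) (T y)‖ := by
      rw [inner_self_eq_norm_sq_to_K, norm_pow, RCLike.norm_ofReal, abs_norm, sq]; rfl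
    rw [h2, ← h1]
    exact (norm_inner_le_norm _ _).trans
      (mul_le_mul_of_nonneg_right (hadj (f y)) (norm_nonneg _))
  have base : ∃ C : ℝ, 0 ≤ C ∧ ∀ x, ‖f (f^[n] x)‖ ≤ C * ‖f^[n] x‖ := by
    refine ⟨0, le_rfl, fun x => ?_⟩
    rw [← Function.iterate_succ_apply' f n x, Function.iterate_succ_apply f n x]
    have h : ‖f^[n] (f x)‖ = 0 := by
      rw [Submodule.coe_norm, hnil, norm_zero]
    simp [h]
  have step : ∀ m, (∃ C : ℝ, 0 ≤ C ∧ ∀ x, ‖f (f^[m + 1] x)‖ ≤ C * ‖f^[m + 1] x‖) →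
      ∃ C : ℝ, 0 ≤ C ∧ ∀ x, ‖f (f^[m] x)‖ ≤ C * ‖f^[m] x‖ := by
    rintro m ⟨C, hC, h⟩
    refine ⟨c * (1 + C), by positivity, fun x => ?_⟩
    have hx := h x
    rw [Function.iterate_succ_apply'] at hx
    generalize f^[m] x = y at hx ⊢
    have hk : ‖f y‖ * ‖f y‖ ≤ (c * (1 + C) * ‖y‖) * ‖f y‖ := by
      calc ‖f y‖ * ‖f y‖ ≤ c * (‖f y‖ + ‖f (f y)‖) * ‖y‖ := key y
        _ ≤ c * (‖f y‖ + C * ‖f y‖) * ‖y‖ := by gcongr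
        _ = (c * (1 + C) * ‖y‖) * ‖f y‖ := by ring
    rcases (norm_nonneg (f y)).eq_or_lt with h0 | h0
    · rw [← h0]; positivity
    · exact le_of_mul_le_mul_right hk h0
  have descend : ∀ m, (∃ C : ℝ, 0 ≤ C ∧ ∀ x, ‖f (f^[m] x)‖ ≤ C * ‖f^[m] x‖) →
      ∃ C : ℝ, 0 ≤ C ∧ ∀ x, ‖f x‖ ≤ C * ‖x‖ := by
    intro m
    induction m with
    | zero => exact id
    | succ m ih => exact fun h => ih (step m h)
  obtain ⟨C, hC, h⟩ := descend n base
  exact ⟨⟨C, hC, h⟩, domain_eq_top_of_bound T hdense hclosed C h⟩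
end

section
/- Let H be a complex Hilbert space and let T be a densely defined closed hyponormal linear operator with domain D(T) ⊆ H, i.e. D(T) ⊆ D(T*) and ‖T* x‖ ≤ ‖T x‖ for all x ∈ D(T). Suppose T is nilpotent: T maps D(T) into D(T) and Tⁿ x = 0 for all x ∈ D(T), for some n ≥ 1. Then D(T) = H and T x = 0 for every x ∈ H. -/
/-!
For `y` in the domain with `T (T y) = 0`, hyponormality at `T y` gives `T* (T y) = 0`, hence
`‖T y‖² = ⟪T y, T y⟫ = ⟪T* (T y), y⟫ = 0`. So `ker T² = ker T`, and nilpotency forces `T = 0` on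
its domain. The graph of `T` is then `D(T) × {0}`; since it is closed, `D(T)` is closed, and being
dense it is all of `H`.
-/

/-- A densely defined closed hyponormal nilpotent operator `T` is everywhere defined
and identically zero. -/
theorem closed_hyponormal_nilpotent_eq_zero
    {H : Type*} [NormedAddCommGroup H] [InnerProductSpace ℂ H] [CompleteSpace H]
    (T : H →ₗ.[ℂ] H)
    (hdense : Dense (T.domain : Set H))
    (hclosed : T.IsClosed)
    (hsub : ∀ x : T.domain, (x : H) ∈ T.adjoint.domain)
    (hhypo : ∀ x : T.domain, ‖T.adjoint ⟨(x : H), hsub x⟩‖ ≤ ‖T x‖)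
    (hmaps : ∀ x : T.domain, (T x : H) ∈ T.domain)
    (n : ℕ) (hn : 1 ≤ n)
    (hnil : ∀ x : T.domain,
      ((((fun y : T.domain => (⟨T y, hmaps y⟩ : T.domain))^[n] x) : T.domain) : H) = 0) :
    T.domain = ⊤ ∧ ∀ x : T.domain, T x = 0 := by
  have hker : ∀ y : T.domain, T ⟨T y, hmaps y⟩ = 0 → T y = 0 := by
    intro y hy
    have h1 : T.adjoint ⟨T y, hsub ⟨T y, hmaps y⟩⟩ = 0 := by
      have h := hhypo ⟨T y, hmaps y⟩
      rw [hy, norm_zero] at h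
      exact norm_le_zero_iff.mp h
    have h2 := T.adjoint_isFormalAdjoint hdense ⟨T y, hsub ⟨T y, hmaps y⟩⟩ y
    rw [h1, inner_zero_left] at h2
    exact inner_self_eq_zero.mp h2.symm
  -- Lowers the exponent from `m + 1` to `1`, one application of `hker` at a time.
  have hiter : ∀ m : ℕ, ∀ x : T.domain,
      ((((fun y : T.domain => (⟨T y, hmaps y⟩ : T.domain))^[m + 1] x) : T.domain) : H) = 0 →
        T x = 0 := by
    intro m
    induction m with
    | zero => exact fun x hx => hx
    | succ m ih =>
      intro x hx
      rw [Function.iterate_succ_apply] at hx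
      exact hker x (ih _ hx)
  have hzero : ∀ x : T.domain, T x = 0 := by
    obtain ⟨m, rfl⟩ : ∃ m, n = m + 1 := ⟨n - 1, by omega⟩
    exact fun x => hiter m x (hnil x)
  refine ⟨?_, hzero⟩
  have hdom : (T.domain : Set H) = (fun x : H => (x, (0 : H))) ⁻¹' (T.graph : Set (H × H)) := by
    ext x
    simp only [Set.mem_preimage, SetLike.mem_coe, LinearPMap.mem_graph_iff]
    constructor
    · exact fun hx => ⟨⟨x, hx⟩, rfl, hzero _⟩
    · rintro ⟨y, rfl, -⟩
      exact y.2
  have hcl : IsClosed (T.domain : Set H) := by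
    rw [hdom]
    exact IsClosed.preimage (by fun_prop) hclosed
  exact SetLike.coe_injective (hcl.closure_eq.symm.trans hdense.closure_eq)
end
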